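/- For any state x : V → ℝ, writing x_ave = N⁻¹ Σ_{u∈V} x_u and d = N⁻¹ Σ_{u∈V} (x_u − x_ave)², the following deterministic inequality holds: N⁻¹ Σ_{v∈V} ( (q/N) Σ_{u∈N⁺_v} (x_v − x_u) )² ≤ 4 · (q² · deg_max² / N²) · d. -/

import Mathlib

/-!
Differences do not see a common shift, so `x` may be centred at any `c`. By Cauchy–Schwarz and
`(a - b)² ≤ 2 (a² + b²)`, the squared increment at `v` is at most twice the out-degree times
`∑ u ∈ N⁺ v, ((x v - c)² + (x u - c)²)`. Summing over `v`, each `(x u - c)²` is counted once per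
out-neighbour of `u` and once per in-neighbour of `u`.
-/

section BipartiteSums

open scoped Finset

variable {α β A R : Type*}

theorem sum_sum_eq_sum_card_nsmul [Fintype α] [Fintype β] [AddCommMonoid A]
    {N : α → Finset β} {M : β → Finset α} (hadj : ∀ b a, b ∈ N a ↔ a ∈ M b) (g : β → A) :
    ∑ a, ∑ b ∈ N a, g b = ∑ b, #(M b) • g b := by
  have hswap : ∑ a, ∑ b ∈ N a, g b = ∑ b, ∑ _a ∈ M b, g b :=
    Finset.sum_comm' fun a b => by simp only [Finset.mem_univ, true_and, and_true, hadj]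
  simpa only [Finset.sum_const] using hswap

theorem sum_sum_le_nsmul_sum_of_card_le [Fintype α] [Fintype β] [AddCommMonoid A] [PartialOrder A]
    [IsOrderedAddMonoid A] {N : α → Finset β} {M : β → Finset α}
    (hadj : ∀ b a, b ∈ N a ↔ a ∈ M b) {n : ℕ} (hM : ∀ b, #(M b) ≤ n) {g : β → A} (hg : 0 ≤ g) :
    ∑ a, ∑ b ∈ N a, g b ≤ n • ∑ b, g b := by
  rw [sum_sum_eq_sum_card_nsmul hadj, ← Finset.sum_nsmul]
  exact Finset.sum_le_sum fun b _ => nsmul_le_nsmul_left (hg b) (hM b)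

variable [CommRing R] [LinearOrder R] [IsStrictOrderedRing R]

theorem sq_sum_const_sub_le (s : Finset β) (a : R) (g : β → R) :
    (∑ b ∈ s, (a - g b)) ^ 2 ≤ 2 * #s * (#s * a ^ 2 + ∑ b ∈ s, g b ^ 2) := by
  have sub_sq_le (b : β) : (a - g b) ^ 2 ≤ 2 * (a ^ 2 + g b ^ 2) := by
    simpa only [← sub_eq_add_neg, neg_sq] using add_sq_le (a := a) (b := -g b)
  calc (∑ b ∈ s, (a - g b)) ^ 2
      ≤ #s * ∑ b ∈ s, (a - g b) ^ 2 := sq_sum_le_card_mul_sum_sq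
    _ ≤ #s * ∑ b ∈ s, 2 * (a ^ 2 + g b ^ 2) := by gcongr with b; exact sub_sq_le b
    _ = 2 * #s * (#s * a ^ 2 + ∑ b ∈ s, g b ^ 2) := by
      rw [← Finset.mul_sum, Finset.sum_add_distrib, Finset.sum_const, nsmul_eq_mul]
      ring

theorem sum_sq_sum_sub_le [Fintype α] [Fintype β] {N : α → Finset β} {M : β → Finset α}
    (hadj : ∀ b a, b ∈ N a ↔ a ∈ M b) {m n : ℕ} (hN : ∀ a, #(N a) ≤ m) (hM : ∀ b, #(M b) ≤ n)
    (f : α → R) (g : β → R) :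
    ∑ a, (∑ b ∈ N a, (f a - g b)) ^ 2 ≤ 2 * m * (m * ∑ a, f a ^ 2 + n * ∑ b, g b ^ 2) :=
  calc ∑ a, (∑ b ∈ N a, (f a - g b)) ^ 2
      ≤ ∑ a, 2 * #(N a) * (#(N a) * f a ^ 2 + ∑ b ∈ N a, g b ^ 2) :=
        Finset.sum_le_sum fun a _ => sq_sum_const_sub_le (N a) (f a) g
    _ ≤ ∑ a, 2 * m * (m * f a ^ 2 + ∑ b ∈ N a, g b ^ 2) := by gcongr <;> exact hN _
    _ = 2 * m * (m * ∑ a, f a ^ 2 + ∑ a, ∑ b ∈ N a, g b ^ 2) := by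
        simp only [← Finset.mul_sum, Finset.sum_add_distrib]
    _ ≤ 2 * m * (m * ∑ a, f a ^ 2 + n * ∑ b, g b ^ 2) := by
        gcongr
        rw [← nsmul_eq_mul]
        exact sum_sum_le_nsmul_sum_of_card_le hadj hM fun b => sq_nonneg (g b)

end BipartiteSums

theorem sum_sq_sum_neighbor_sub_le {V R : Type*} [Fintype V] [CommRing R] [LinearOrder R]
    [IsStrictOrderedRing R] {Nplus Nminus : V → Finset V}
    (hadj : ∀ u v, u ∈ Nplus v ↔ v ∈ Nminus u) {m n : ℕ}
    (hplus : ∀ v, (Nplus v).card ≤ m) (hminus : ∀ v, (Nminus v).card ≤ n) (x : V → R) (c : R) :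
    ∑ v, (∑ u ∈ Nplus v, (x v - x u)) ^ 2 ≤ 2 * (m * (m + n)) * ∑ u, (x u - c) ^ 2 := by
  have hcentred := sum_sq_sum_sub_le hadj hplus hminus (fun v => x v - c) (fun u => x u - c)
  simp only [sub_sub_sub_cancel_right] at hcentred
  linarith

theorem bga_increment_variance_bound_general {V R : Type*} [Fintype V] [Nonempty V] [Field R]
    [LinearOrder R] [IsStrictOrderedRing R] {Nplus Nminus : V → Finset V}
    (hadj : ∀ u v, u ∈ Nplus v ↔ v ∈ Nminus u) {m n : ℕ}
    (hplus : ∀ v, (Nplus v).card ≤ m) (hminus : ∀ v, (Nminus v).card ≤ n)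
    (q : R) (x : V → R) (c : R) :
    (Fintype.card V : R)⁻¹ * ∑ v, (q / Fintype.card V * ∑ u ∈ Nplus v, (x v - x u)) ^ 2 ≤
      2 * (q ^ 2 * (m * (m + n)) / (Fintype.card V : R) ^ 2) *
        ((Fintype.card V : R)⁻¹ * ∑ u, (x u - c) ^ 2) := by
  simp only [mul_pow, ← Finset.mul_sum]
  calc (Fintype.card V : R)⁻¹ *
        ((q / Fintype.card V) ^ 2 * ∑ v, (∑ u ∈ Nplus v, (x v - x u)) ^ 2)
      ≤ (Fintype.card V : R)⁻¹ *
        ((q / Fintype.card V) ^ 2 * (2 * (m * (m + n)) * ∑ u, (x u - c) ^ 2)) := by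
        gcongr
        exact sum_sq_sum_neighbor_sub_le hadj hplus hminus x c
    _ = _ := by ring

/-- For any state `x : V → ℝ`, with `x_ave = N⁻¹ Σ_u x_u` and
`d = N⁻¹ Σ_u (x_u − x_ave)²`, the deterministic inequality
`N⁻¹ Σ_v ((q/N) Σ_{u∈N⁺_v} (x_v − x_u))² ≤ 4 q² deg_max² d / N²` holds. -/
theorem bga_increment_variance_bound
    {V : Type*} [Fintype V] [DecidableEq V] [Nonempty V]
    (Nplus Nminus : V → Finset V)
    (hadj : ∀ u v : V, u ∈ Nplus v ↔ v ∈ Nminus u)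
    (q : ℝ) (hq0 : 0 < q) (hq1 : q < 1)
    (degMax : ℕ)
    (hdeg : degMax = max (Finset.univ.sup fun w => (Nplus w).card)
                         (Finset.univ.sup fun w => (Nminus w).card))
    (x : V → ℝ) (xave d : ℝ)
    (hxave : xave = (Fintype.card V : ℝ)⁻¹ * ∑ u, x u)
    (hd : d = (Fintype.card V : ℝ)⁻¹ * ∑ u, (x u - xave) ^ 2) :
    (Fintype.card V : ℝ)⁻¹ *
        ∑ v, (q / (Fintype.card V : ℝ) * ∑ u ∈ Nplus v, (x v - x u)) ^ 2 ≤
      4 * (q ^ 2 * (degMax : ℝ) ^ 2 / (Fintype.card V : ℝ) ^ 2) * d := by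
  have hplus (v : V) : (Nplus v).card ≤ degMax :=
    hdeg ▸ le_max_of_le_left (Finset.le_sup (f := fun w => (Nplus w).card) (Finset.mem_univ v))
  have hminus (v : V) : (Nminus v).card ≤ degMax :=
    hdeg ▸ le_max_of_le_right (Finset.le_sup (f := fun w => (Nminus w).card) (Finset.mem_univ v))
  rw [hd]
  exact (bga_increment_variance_bound_general hadj hplus hminus q x xave).trans_eq (by ring)
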